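/- For all real numbers x ≥ 3^{10} and y, and every integer A of 𝒜*(x,y) with P(A) > 3, there exists a chain A = a₁ − a₂ − ⋯ − a_s of integers of 𝒜*(x,y) such that P(a_j) = P(A) for all 1 ≤ j < s, and P(a_s) = 3. -/

import Mathlib

/-- `Pmax n` is the largest prime factor of `n`, with the convention `Pmax 1 = 1`. -/
def Pmax (n : ℕ) : ℕ := if n ≤ 1 then 1 else n.primeFactors.sup id

/-- The Schinzel–Szekeres function: if `n = p₁ p₂ ⋯ p_Ω` with `p₁ ≥ p₂ ≥ ⋯ ≥ p_Ω` prime,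
`SS n = max_{1 ≤ k ≤ Ω} p₁ ⋯ p_{k-1} p_k²`, and `SS 1 = 1`.
(`Nat.primeFactorsList n` is the *increasing* list of prime factors with multiplicity;
the value produced for the index `j` is the one for `k = Ω - j`.) -/
def SS (n : ℕ) : ℕ :=
  ((List.range n.primeFactorsList.length).map
    (fun j => (n.primeFactorsList.drop j).headI * (n.primeFactorsList.drop j).prod)).foldr max 1

/-- A chain in the divisor graph: a finite sequence of pairwise distinct positive
integers in which any two consecutive terms are adjacent in the divisor graph
(the smaller divides the larger). -/
def IsDivChain (l : List ℕ) : Prop :=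
  l.Nodup ∧ (∀ n ∈ l, 0 < n) ∧ l.Chain' (fun a b => a ∣ b ∨ b ∣ a)

/-- `n ∈ 𝒜*(x,y)`, i.e. `n ≥ 1`, `n > √x`, `P(n) ≤ min(y, √x/27)` and `S(n) ≤ x`. -/
def AstarMem (x y : ℝ) (n : ℕ) : Prop :=
  1 ≤ n ∧ Real.sqrt x < (n : ℝ) ∧ (Pmax n : ℝ) ≤ min y (Real.sqrt x / 27) ∧ (SS n : ℝ) ≤ x

/-!
For `n ≥ 1`, let the *padding* of `n` be the first of the integers `n`, `3 n`, `9 n`, … to exceed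
`√x`; an element of `𝒜*(x,y)` is its own padding. If `q` is a prime factor of `q n ∣ A`, then the
paddings of `q n` and of `n` both divide `q` times the padding of `n`, because `q n` never needs
more factors `3` than `n` does. These integers satisfy `S ≤ x`: any added factors `3` raise `S` to
at most `3` times the integer, and an integer with added factors is at most `3 q √x`, where
`q ≤ √x / 9`. Removing from `A` one prime factor at a time, `P(A)` last, therefore leads through
`𝒜*(x,y)` to the padding of `1`, a power of `3`.
-/

section LargestPrimeFactor

theorem Pmax_eq_max_sup (n : ℕ) : Pmax n = max 1 (n.primeFactors.sup id) := by
  unfold Pmax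
  split_ifs with hn
  · interval_cases n <;> simp
  · have hp := Nat.minFac_prime (by omega : n ≠ 1)
    have hmem : n.minFac ∈ n.primeFactors :=
      Nat.mem_primeFactors.2 ⟨hp, n.minFac_dvd, by omega⟩
    exact (max_eq_right (hp.one_le.trans (Finset.le_sup (f := id) hmem))).symm

theorem Pmax_one : Pmax 1 = 1 := rfl

theorem Pmax_mul {m n : ℕ} (hm : m ≠ 0) (hn : n ≠ 0) :
    Pmax (m * n) = max (Pmax m) (Pmax n) := by
  simp only [Pmax_eq_max_sup, Nat.primeFactors_mul hm hn, Finset.sup_union]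
  rw [max_max_max_comm, max_self]

theorem Pmax_prime_pow {p k : ℕ} (hp : p.Prime) (hk : k ≠ 0) : Pmax (p ^ k) = p := by
  simp [Pmax_eq_max_sup, Nat.primeFactors_prime_pow hk hp, hp.one_le]

theorem Pmax_prime {p : ℕ} (hp : p.Prime) : Pmax p = p := by
  simpa using Pmax_prime_pow hp one_ne_zero

theorem Pmax_prime_pow_le {p : ℕ} (hp : p.Prime) (k : ℕ) : Pmax (p ^ k) ≤ p := by
  rcases eq_or_ne k 0 with rfl | hk
  · simpa [Pmax_one] using hp.one_le
  · exact (Pmax_prime_pow hp hk).le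

theorem Pmax_mem_primeFactors {n : ℕ} (hn : 1 < Pmax n) : Pmax n ∈ n.primeFactors := by
  have hn1 : ¬n ≤ 1 := fun h => by simp [Pmax, h] at hn
  obtain ⟨p, hp, hsup⟩ := n.primeFactors.exists_mem_eq_sup
    (Nat.nonempty_primeFactors.2 (by omega)) id
  rwa [Pmax, if_neg hn1, hsup]

end LargestPrimeFactor

section SchinzelSzekeres

theorem SS_one : SS 1 = 1 := by simp [SS]

theorem SS_eq_max {n : ℕ} (hn : 2 ≤ n) :
    SS n = max (n.minFac * n) (SS (n / n.minFac)) := by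
  obtain ⟨k, rfl⟩ := Nat.exists_eq_add_of_le' hn
  have hprod : (k + 2).primeFactorsList.prod = k + 2 := Nat.prod_primeFactorsList (by omega)
  rw [Nat.primeFactorsList_add_two] at hprod
  simp only [SS, Nat.primeFactorsList_add_two, List.length_cons, List.range_succ_eq_map,
    List.map_cons, List.map_map, List.foldr_cons, List.drop_zero, List.headI_cons, hprod,
    Function.comp_def, List.drop_succ_cons]

/-- The convention `1 ≤ S(n)` is the contribution of `d = 1`, because `Nat.minFac 1 = 1`. -/
theorem SS_le_iff {n N : ℕ} (hn : n ≠ 0) : SS n ≤ N ↔ ∀ d, d ∣ n → d.minFac * d ≤ N := by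
  induction n using Nat.strong_induction_on with
  | h n ih =>
    obtain rfl | hn2 : n = 1 ∨ 2 ≤ n := by omega
    · simp [SS_one]
    have hp := Nat.minFac_prime (by omega : n ≠ 1)
    rw [SS_eq_max hn2, max_le_iff, ih _ (Nat.div_lt_self (by omega) hp.one_lt)
      (Nat.div_pos (Nat.minFac_le (by omega)) hp.pos).ne']
    refine ⟨fun ⟨hself, hquot⟩ d hd => ?_, fun h =>
      ⟨h n dvd_rfl, fun d hd => h d (hd.trans (Nat.div_dvd_of_dvd n.minFac_dvd))⟩⟩
    by_cases hpd : n.minFac ∣ d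
    · exact (Nat.mul_le_mul (Nat.minFac_le_of_dvd hp.two_le hpd)
        (Nat.le_of_dvd (by omega) hd)).trans hself
    · refine hquot d (((hp.coprime_iff_not_dvd.2 hpd).symm).dvd_of_dvd_mul_left ?_)
      rwa [Nat.mul_div_cancel' n.minFac_dvd]

theorem one_le_SS {n : ℕ} (hn : n ≠ 0) : 1 ≤ SS n := by
  simpa using (SS_le_iff hn).1 le_rfl 1 (one_dvd n)

theorem SS_le_of_dvd {m n : ℕ} (hn : n ≠ 0) (hmn : m ∣ n) : SS m ≤ SS n :=
  (SS_le_iff (ne_zero_of_dvd_ne_zero hn hmn)).2 fun d hd =>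
    (SS_le_iff hn).1 le_rfl d (hd.trans hmn)

theorem SS_mul_prime_pow_le {b n : ℕ} (hb : b.Prime) (hn : n ≠ 0) (c : ℕ) :
    SS (n * b ^ c) ≤ max (SS n) (b * (n * b ^ c)) := by
  have hpos : 0 < n * b ^ c := Nat.mul_pos (by omega) (Nat.pow_pos hb.pos)
  refine (SS_le_iff hpos.ne').2 fun d hd => le_max_iff.2 ?_
  by_cases hbd : b ∣ d
  · exact Or.inr (Nat.mul_le_mul (Nat.minFac_le_of_dvd hb.two_le hbd) (Nat.le_of_dvd hpos hd))
  · have hcop : d.Coprime (b ^ c) := ((hb.coprime_iff_not_dvd.2 hbd).pow_left c).symm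
    exact Or.inl ((SS_le_iff hn).1 le_rfl d (hcop.dvd_of_dvd_mul_right hd))

end SchinzelSzekeres

section Padding

variable {b t n q : ℕ}

/-- The least `c` such that `t < n * b ^ c`, for `1 < b` and `n ≠ 0`; the defining inequality is
equivalent to `t / n < b ^ c` with the rounded quotient. -/
def padExponent (b t n : ℕ) : ℕ := Nat.clog b (t / n + 1)

/-- The padding of `n`: the first of `n`, `n * b`, `n * b ^ 2`, … to exceed the threshold `t`. -/
def pad (b t n : ℕ) : ℕ := n * b ^ padExponent b t n

theorem padExponent_le_iff (hb : 1 < b) (hn : n ≠ 0) {c : ℕ} :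
    padExponent b t n ≤ c ↔ t < n * b ^ c := by
  rw [padExponent, Nat.clog_le_iff_le_pow hb, Nat.succ_le_iff,
    Nat.div_lt_iff_lt_mul (Nat.pos_of_ne_zero hn), mul_comm]

theorem lt_pad (hb : 1 < b) (hn : n ≠ 0) : t < pad b t n :=
  (padExponent_le_iff hb hn).1 le_rfl

theorem pad_le_mul_of_padExponent_ne_zero (hb : 1 < b) (hn : n ≠ 0)
    (hc : padExponent b t n ≠ 0) : pad b t n ≤ b * t := by
  obtain ⟨c, hcs⟩ := Nat.exists_eq_succ_of_ne_zero hc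
  have hle : n * b ^ c ≤ t := not_lt.1 fun h => by
    have := (padExponent_le_iff hb hn).2 h
    omega
  calc pad b t n = b * (n * b ^ c) := by rw [pad, hcs, Nat.succ_eq_add_one, pow_succ]; ring
    _ ≤ b * t := Nat.mul_le_mul_left b hle

theorem pad_eq_self (hb : 1 < b) (htn : t < n) : pad b t n = n := by
  have hc : padExponent b t n ≤ 0 := (padExponent_le_iff hb (by omega)).2 (by simpa using htn)
  rw [pad, Nat.le_zero.1 hc, pow_zero, mul_one]

theorem pad_mul_dvd_mul_pad (hb : 1 < b) (hq : q ≠ 0) (hn : n ≠ 0) :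
    pad b t (q * n) ∣ q * pad b t n := by
  rw [pad, pad, ← mul_assoc]
  refine mul_dvd_mul_left _ (pow_dvd_pow b ((padExponent_le_iff hb (mul_ne_zero hq hn)).2 ?_))
  calc t < pad b t n := lt_pad hb hn
    _ ≤ q * pad b t n := Nat.le_mul_of_pos_left _ (Nat.pos_of_ne_zero hq)
    _ = q * n * b ^ padExponent b t n := (mul_assoc ..).symm

end Padding

section DivisorGraph

theorem exists_isPath_of_reachable_induce_of_adj {V : Type*} {G : SimpleGraph V} {s : Set V}
    {u v : s} {w : V} (huv : (G.induce s).Reachable u v) (hvw : G.Adj v w) (hw : w ∉ s) :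
    ∃ P : G.Walk u w, P.IsPath ∧ ∀ i < P.length, P.getVert i ∈ s := by
  obtain ⟨Q, hQ⟩ := huv.exists_isPath
  obtain ⟨R, hR, hmem⟩ : ∃ R : G.Walk u v, R.IsPath ∧ ∀ i, R.getVert i ∈ s :=
    ⟨Q.map (SimpleGraph.Embedding.induce s).toHom, hQ.map Subtype.val_injective, fun i =>
      Set.mem_of_eq_of_mem (Q.getVert_map _ i) (Q.getVert i).2⟩
  have hwR : w ∉ R.support := fun h => by
    obtain ⟨i, rfl, -⟩ := SimpleGraph.Walk.mem_support_iff_exists_getVert.1 h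
    exact hw (hmem i)
  refine ⟨R.concat hvw, hR.concat hwR hvw, fun i hi => ?_⟩
  rw [SimpleGraph.Walk.length_concat, Nat.lt_succ_iff] at hi
  rw [SimpleGraph.Walk.concat_eq_append, SimpleGraph.Walk.getVert_append', if_pos hi]
  exact hmem i

/-- The graph on `ℕ` joining two distinct integers when one divides the other. The vertex `0`,
adjacent to all the others, is outside every set of integers to which the graph is restricted. -/
def divisorGraph : SimpleGraph ℕ := SimpleGraph.fromRel (· ∣ ·)

theorem divisorGraph_adj {a b : ℕ} : divisorGraph.Adj a b ↔ a ≠ b ∧ (a ∣ b ∨ b ∣ a) :=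
  SimpleGraph.fromRel_adj _ a b

/-- `a` and `b` are joined by a chain of the divisor graph all of whose terms, endpoints included,
lie in `s`. -/
def DivLinked (s : Set ℕ) (a b : ℕ) : Prop :=
  ∃ (ha : a ∈ s) (hb : b ∈ s), (divisorGraph.induce s).Reachable ⟨a, ha⟩ ⟨b, hb⟩

variable {s : Set ℕ} {a b c : ℕ}

theorem DivLinked.symm : DivLinked s a b → DivLinked s b a :=
  fun ⟨ha, hb, hab⟩ => ⟨hb, ha, hab.symm⟩

theorem DivLinked.trans : DivLinked s a b → DivLinked s b c → DivLinked s a c :=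
  fun ⟨ha, _, hab⟩ ⟨_, hc, hbc⟩ => ⟨ha, hc, hab.trans hbc⟩

theorem DivLinked.of_dvd (ha : a ∈ s) (hb : b ∈ s) (hab : a ∣ b) : DivLinked s a b := by
  refine ⟨ha, hb, ?_⟩
  by_cases h : a = b
  · subst h
    exact .refl _
  · exact SimpleGraph.Adj.reachable
      (SimpleGraph.induce_adj.2 (divisorGraph_adj.2 ⟨h, Or.inl hab⟩))

end DivisorGraph

section Layer

/-- The integers `n > t` with `P(n) = p` and `S(n) ≤ N`. For `t = ⌊√x⌋` and `N = ⌊x⌋` these are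
the integers `n` of `𝒜*(x,y)` with `P(n) = p`, provided `p` is admissible. -/
def layer (t N p : ℕ) : Set ℕ := {n | t < n ∧ Pmax n = p ∧ SS n ≤ N}

variable {b t N p : ℕ} (hb : b.Prime) (htN : t ^ 2 ≤ N)
include hb htN

theorem mul_pad_mem_layer (hbp : b ≤ p) {q n : ℕ} (hqt : b ^ 2 * q ≤ t) (hqn : q * n ≠ 0)
    (hP : Pmax (q * n) = p) (hS : SS (q * n) ≤ N) : q * pad b t n ∈ layer t N p := by
  have hn : n ≠ 0 := right_ne_zero_of_mul hqn
  have hq : 0 < q := Nat.pos_of_ne_zero (left_ne_zero_of_mul hqn)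
  have hpad : q * pad b t n = q * n * b ^ padExponent b t n := (mul_assoc ..).symm
  refine ⟨(lt_pad hb.one_lt hn).trans_le (Nat.le_mul_of_pos_left _ hq), ?_, ?_⟩
  · rw [hpad, Pmax_mul hqn (pow_ne_zero _ hb.ne_zero), hP,
      max_eq_left ((Pmax_prime_pow_le hb _).trans hbp)]
  · by_cases hc : padExponent b t n = 0
    · rwa [hpad, hc, pow_zero, mul_one]
    · have hle : b * (q * pad b t n) ≤ N := calc
        b * (q * pad b t n) ≤ b * (q * (b * t)) := by
          gcongr
          exact pad_le_mul_of_padExponent_ne_zero hb.one_lt hn hc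
        _ = b ^ 2 * q * t := by ring
        _ ≤ t * t := Nat.mul_le_mul_right t hqt
        _ ≤ N := by rwa [← sq]
      rw [hpad] at hle ⊢
      exact (SS_mul_prime_pow_le hb hqn _).trans (max_le hS hle)

theorem pad_mem_layer (hbp : b ≤ p) (hbt : b ^ 2 ≤ t) {n : ℕ} (hn : n ≠ 0) (hP : Pmax n = p)
    (hS : SS n ≤ N) : pad b t n ∈ layer t N p := by
  simpa using mul_pad_mem_layer (q := 1) hb htN hbp (by simpa using hbt) (by simpa using hn)
    (by simpa using hP) (by simpa using hS)

theorem divLinked_pad_mul_mul_pad (hbp : b ≤ p) {q n : ℕ} (hqt : b ^ 2 * q ≤ t)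
    (hqn : q * n ≠ 0) (hP : Pmax (q * n) = p) (hS : SS (q * n) ≤ N) :
    DivLinked (layer t N p) (pad b t (q * n)) (q * pad b t n) := by
  have hq : q ≠ 0 := left_ne_zero_of_mul hqn
  have hbt : b ^ 2 ≤ t := (Nat.le_mul_of_pos_right _ (Nat.pos_of_ne_zero hq)).trans hqt
  exact .of_dvd (pad_mem_layer hb htN hbp hbt hqn hP hS)
    (mul_pad_mem_layer hb htN hbp hqt hqn hP hS)
    (pad_mul_dvd_mul_pad hb.one_lt hq (right_ne_zero_of_mul hqn))

theorem divLinked_pad_mul_pad (hbp : b ≤ p) {q n : ℕ} (hqt : b ^ 2 * q ≤ t) (hqn : q * n ≠ 0)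
    (hPqn : Pmax (q * n) = p) (hPn : Pmax n = p) (hS : SS (q * n) ≤ N) :
    DivLinked (layer t N p) (pad b t (q * n)) (pad b t n) := by
  have hq : 0 < q := Nat.pos_of_ne_zero (left_ne_zero_of_mul hqn)
  have hn : pad b t n ∈ layer t N p :=
    pad_mem_layer hb htN hbp ((Nat.le_mul_of_pos_right _ hq).trans hqt)
      (right_ne_zero_of_mul hqn) hPn ((SS_le_of_dvd hqn (dvd_mul_left n q)).trans hS)
  exact (divLinked_pad_mul_mul_pad hb htN hbp hqt hqn hPqn hS).trans
    (DivLinked.of_dvd hn (mul_pad_mem_layer hb htN hbp hqt hqn hPqn hS)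
      (dvd_mul_left _ q)).symm

theorem divLinked_pad_mul_pad_prime (hp : p.Prime) (hbp : b ≤ p) (hpt : b ^ 2 * p ≤ t) (B : ℕ) :
    B ≠ 0 → Pmax (B * p) = p → SS (B * p) ≤ N →
      DivLinked (layer t N p) (pad b t (B * p)) (pad b t p) := by
  induction B using induction_on_primes with
  | zero => exact fun h => absurd rfl h
  | one =>
    rw [one_mul]
    intro _ hP hS
    have hbt : b ^ 2 ≤ t := (Nat.le_mul_of_pos_right _ hp.pos).trans hpt
    have hmem := pad_mem_layer hb htN hbp hbt hp.ne_zero hP hS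
    exact .of_dvd hmem hmem dvd_rfl
  | prime_mul q B hq ih =>
    rw [mul_assoc]
    intro hqB hP hS
    have hB : B ≠ 0 := right_ne_zero_of_mul hqB
    have hBp : B * p ≠ 0 := mul_ne_zero hB hp.ne_zero
    have hqBp : q * (B * p) ≠ 0 := mul_ne_zero hq.ne_zero hBp
    have hmax : max q (max (Pmax B) p) = p := by
      rwa [Pmax_mul hq.ne_zero hBp, Pmax_mul hB hp.ne_zero, Pmax_prime hq, Pmax_prime hp] at hP
    have hPB : Pmax (B * p) = p := by
      rw [Pmax_mul hB hp.ne_zero, Pmax_prime hp]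
      omega
    have hqt : b ^ 2 * q ≤ t := (Nat.mul_le_mul_left _ (by omega)).trans hpt
    exact (divLinked_pad_mul_pad hb htN hbp hqt hqBp hP hPB hS).trans
      (ih hB hPB ((SS_le_of_dvd hqBp (dvd_mul_left _ q)).trans hS))

theorem divLinked_mul_pad_one (hp : p.Prime) (hbp : b ≤ p) (hpt : b ^ 2 * p ≤ t) {A : ℕ}
    (hA : A ∈ layer t N p) : DivLinked (layer t N p) A (p * pad b t 1) := by
  obtain ⟨htA, hPA, hSA⟩ := hA
  have hA0 : A ≠ 0 := by omega
  have hpA : p ∣ A := Nat.dvd_of_mem_primeFactors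
    (hPA ▸ Pmax_mem_primeFactors (hPA.symm ▸ hp.one_lt))
  have hSp : SS p ≤ N := (SS_le_of_dvd hA0 hpA).trans hSA
  obtain ⟨B, rfl⟩ := exists_eq_mul_left_of_dvd hpA
  have hchain :=
    divLinked_pad_mul_pad_prime hb htN hp hbp hpt B (left_ne_zero_of_mul hA0) hPA hSA
  rw [pad_eq_self hb.one_lt htA] at hchain
  have hlast := divLinked_pad_mul_mul_pad (n := 1) hb htN hbp hpt (by simpa using hp.ne_zero)
    (by simpa using Pmax_prime hp) (by simpa using hSp)
  exact hchain.trans (by simpa using hlast)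

theorem exists_isPath_layer (hbp : b < p) (hpt : b ^ 2 * p ≤ t) {A : ℕ}
    (hA : A ∈ layer t N p) :
    ∃ w ∈ layer t N b, ∃ P : divisorGraph.Walk A w,
      P.IsPath ∧ ∀ i < P.length, P.getVert i ∈ layer t N p := by
  have hp : p.Prime := Nat.prime_of_mem_primeFactors
    (hA.2.1 ▸ Pmax_mem_primeFactors (hA.2.1.symm ▸ hb.one_lt.trans hbp))
  obtain ⟨hA', hlast, hreach⟩ := divLinked_mul_pad_one hb htN hp hbp.le hpt hA
  have ht : 1 ≤ t := (Nat.mul_pos (pow_pos hb.pos 2) hp.pos).trans_le hpt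
  have hexp : padExponent b t 1 ≠ 0 := fun h => by
    have := (padExponent_le_iff hb.one_lt one_ne_zero).1 h.le
    rw [pow_zero] at this
    omega
  have hPw : Pmax (pad b t 1) = b := by rw [pad, one_mul, Pmax_prime_pow hb hexp]
  have hSw : SS (pad b t 1) ≤ N :=
    (SS_le_of_dvd (by have := hlast.1; omega) (dvd_mul_left _ p)).trans hlast.2.2
  have hw : pad b t 1 ∉ layer t N p := fun h => hbp.ne (hPw.symm.trans h.2.1)
  have hadj : divisorGraph.Adj (p * pad b t 1) (pad b t 1) :=
    divisorGraph_adj.2 ⟨fun h => hw (h ▸ hlast), Or.inr (dvd_mul_left _ p)⟩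
  exact ⟨pad b t 1, ⟨lt_pad hb.one_lt one_ne_zero, hPw, hSw⟩,
    exists_isPath_of_reachable_induce_of_adj hreach hadj hw⟩

end Layer

section Astar

theorem floor_sqrt_sq_le_floor (x : ℝ) : ⌊√x⌋₊ ^ 2 ≤ ⌊x⌋₊ := by
  rcases le_total 0 x with hx | hx
  · refine Nat.le_floor ?_
    push_cast
    calc (⌊√x⌋₊ : ℝ) ^ 2 ≤ √x ^ 2 := by gcongr; exact Nat.floor_le (Real.sqrt_nonneg x)
      _ = x := Real.sq_sqrt hx
  · simp [Real.sqrt_eq_zero_of_nonpos hx]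

theorem mem_layer_floor_iff {x y : ℝ} {p n : ℕ} (hp : (p : ℝ) ≤ min y (√x / 27)) :
    n ∈ layer ⌊√x⌋₊ ⌊x⌋₊ p ↔ AstarMem x y n ∧ Pmax n = p := by
  have hlt : ⌊√x⌋₊ < n ↔ √x < n := Nat.floor_lt (Real.sqrt_nonneg x)
  have hSS (hn : n ≠ 0) : SS n ≤ ⌊x⌋₊ ↔ (SS n : ℝ) ≤ x :=
    Nat.le_floor_iff' (Nat.one_le_iff_ne_zero.1 (one_le_SS hn))
  constructor
  · rintro ⟨htn, rfl, hS⟩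
    have hn : n ≠ 0 := by omega
    exact ⟨⟨Nat.pos_of_ne_zero hn, hlt.1 htn, hp, (hSS hn).1 hS⟩, rfl⟩
  · rintro ⟨⟨hn, htn, -, hS⟩, hP⟩
    exact ⟨hlt.2 htn, hP, (hSS (by omega)).2 hS⟩

end Astar

theorem stmt_13_general (x y : ℝ) (A : ℕ) (hA : AstarMem x y A)
    (hPA : 3 < Pmax A) :
    ∃ s : ℕ, ∃ a : ℕ → ℕ, 1 ≤ s ∧ a 1 = A ∧
      (∀ i j, 1 ≤ i → i ≤ s → 1 ≤ j → j ≤ s → i ≠ j → a i ≠ a j) ∧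
      (∀ i, 1 ≤ i → i < s → (a i ∣ a (i + 1) ∨ a (i + 1) ∣ a i)) ∧
      (∀ i, 1 ≤ i → i ≤ s → AstarMem x y (a i)) ∧
      (∀ j, 1 ≤ j → j < s → Pmax (a j) = Pmax A) ∧
      Pmax (a s) = 3 := by
  have hlayer {n : ℕ} := mem_layer_floor_iff (n := n) hA.2.2.1
  have h3 : ((3 : ℕ) : ℝ) ≤ min y (√x / 27) := le_trans (by exact_mod_cast hPA.le) hA.2.2.1
  have hpt : 3 ^ 2 * Pmax A ≤ ⌊√x⌋₊ := Nat.le_floor (by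
    have := hA.2.2.1.trans (min_le_right _ _)
    push_cast
    linarith [Real.sqrt_nonneg x])
  obtain ⟨w, hw, P, hP, hPlayer⟩ := exists_isPath_layer Nat.prime_three
    (floor_sqrt_sq_le_floor x) hPA hpt (hlayer.2 ⟨hA, rfl⟩)
  have hwA := (mem_layer_floor_iff h3).1 hw
  refine ⟨P.length + 1, fun i => P.getVert (i - 1), by omega, P.getVert_zero, ?_, ?_, ?_, ?_, ?_⟩
  · intro i j hi hi' hj hj' hij h
    have := hP.getVert_injOn (show i - 1 ≤ P.length by omega) (show j - 1 ≤ P.length by omega) h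
    omega
  · intro i hi hi'
    obtain ⟨k, rfl⟩ := Nat.exists_eq_add_of_le' hi
    exact (divisorGraph_adj.1 (P.adj_getVert_succ (by omega))).2
  · intro i hi hi'
    rcases hi'.lt_or_eq with hlt | rfl
    · exact (hlayer.1 (hPlayer _ (by omega))).1
    · simpa using hwA.1
  · exact fun j hj hj' => (hPlayer _ (by omega)).2.1
  · simpa using hwA.2

/-- Lemma 8.2: for `x ≥ 3¹⁰`, any `y`, and any `A ∈ 𝒜*(x,y)` with `P(A) > 3`, there is
a chain `A = a₁ − ⋯ − a_s` of integers of `𝒜*(x,y)` with `P(a_j) = P(A)` for all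
`1 ≤ j < s` and `P(a_s) = 3`. -/
theorem stmt_13 (x y : ℝ) (hx : (3 : ℝ) ^ 10 ≤ x) (A : ℕ) (hA : AstarMem x y A)
    (hPA : 3 < Pmax A) :
    ∃ s : ℕ, ∃ a : ℕ → ℕ, 1 ≤ s ∧ a 1 = A ∧
      (∀ i j, 1 ≤ i → i ≤ s → 1 ≤ j → j ≤ s → i ≠ j → a i ≠ a j) ∧
      (∀ i, 1 ≤ i → i < s → (a i ∣ a (i + 1) ∨ a (i + 1) ∣ a i)) ∧
      (∀ i, 1 ≤ i → i ≤ s → AstarMem x y (a i)) ∧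
      (∀ j, 1 ≤ j → j < s → Pmax (a j) = Pmax A) ∧
      Pmax (a s) = 3 :=
  stmt_13_general x y A hA hPA
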